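/- arXiv:2007.01175 — 2 statements merged into one kernel-verified Lean document; each statement's English description precedes it below -/
import Mathlib

section
/- For any finitely supported signed measures ω, σ on a space X (e.g. finite formal ℝ-linear combinations of Dirac measures) and any n ∈ ℕ, the falling factorial measures satisfy the binomial identity (ω+σ)_n = Σ_{k=0}^{n} C(n,k) · Sym((ω)_k ⊗ (σ)_{n−k}), where Sym denotes symmetrization of the tensor product measure on X^n. -/
open Finset

section Defs

variable {X : Type*} [Fintype X] [DecidableEq X]

/-- The falling factorial measure `(ω)_n` on `X^n`, given by the density
`(ω)_n(y₁,…,y_n) = ω(y₁)(ω(y₂)−δ_{y₁}(y₂))⋯(ω(y_n)−δ_{y₁}(y_n)−⋯−δ_{y_{n−1}}(y_n))`. -/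
noncomputable def ff (ω : X → ℝ) : (n : ℕ) → (Fin n → X) → ℝ
  | 0 => fun _ => 1
  | n + 1 => fun y =>
      ff ω n (fun i => y i.castSucc) *
        (ω (y (Fin.last n)) - ∑ i : Fin n, if y i.castSucc = y (Fin.last n) then (1 : ℝ) else 0)

/-- Dirac measure at `x`. -/
noncomputable def diracMeas (x : X) : X → ℝ := fun a => if a = x then 1 else 0

/-- The measure `δ_{x₁}+⋯+δ_{x_k}` of a multiset `[x₁,…,x_k]`. -/
noncomputable def msMeas {k : ℕ} (x : Fin k → X) : X → ℝ :=
  fun a => ((Finset.univ.filter (fun i => x i = a)).card : ℝ)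

/-- Integration `⟨μ, f⟩` of a function against a measure on `X^n`. -/
noncomputable def pairing (n : ℕ) (μ f : (Fin n → X) → ℝ) : ℝ :=
  ∑ y : Fin n → X, μ y * f y

/-- Symmetrization of a function/measure on `X^n`. -/
noncomputable def symmFun (n : ℕ) (μ : (Fin n → X) → ℝ) : (Fin n → X) → ℝ :=
  fun y => (∑ π : Equiv.Perm (Fin n), μ (y ∘ π)) / n.factorial

/-- Tensor product of measures/functions on `X^k` and `X^m`. -/
noncomputable def tensFun {k m : ℕ} (μ : (Fin k → X) → ℝ) (ν : (Fin m → X) → ℝ) :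
    (Fin (k + m) → X) → ℝ :=
  fun y => μ (fun i => y (Fin.castAdd m i)) * ν (fun j => y (Fin.natAdd k j))

/-- Re-indexing along an equality of dimensions. -/
def castFun {m n : ℕ} (h : m = n) (μ : (Fin m → X) → ℝ) : (Fin n → X) → ℝ :=
  fun y => μ (fun i => y (Fin.cast h i))

/-- The product measure `ω^{⊗n}` (and likewise the tensor power `ξ^{⊗n}` of a function). -/
noncomputable def prodMeas (ω : X → ℝ) (n : ℕ) : (Fin n → X) → ℝ :=
  fun y => ∏ i, ω (y i)

/-- A function on `X^n` is symmetric. -/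
def IsSymmFun {n : ℕ} (f : (Fin n → X) → ℝ) : Prop :=
  ∀ (π : Equiv.Perm (Fin n)) (y : Fin n → X), f (y ∘ π) = f y

end Defs

/-- The set of surjections `Fin n → Fin k`; these correspond to set partitions of
`{1,…,n}` into `k` nonempty blocks together with an ordering of the blocks. -/
noncomputable def surjs (n k : ℕ) : Finset (Fin n → Fin k) :=
  Finset.univ.filter (fun g => Function.Surjective g)

/-- Cardinality of the fiber `g⁻¹(i)` (the size of block `i`). -/
def fiberCard {n k : ℕ} (g : Fin n → Fin k) (i : Fin k) : ℕ :=
  (Finset.univ.filter (fun j => g j = i)).card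

section Ops

variable {X : Type*} [Fintype X] [DecidableEq X]

/-- Stirling operator of the second kind `S(n,k) = Σ_{λ ∈ UP(n,k)} D_λ`:
summing the substitute-and-symmetrize operators over unordered partitions of `{1,…,n}`
into `k` nonempty blocks is the same as summing `f(y ∘ g)` over the surjections
`g : Fin n → Fin k` and dividing by `k!`. -/
noncomputable def Sop (n k : ℕ) (f : (Fin n → X) → ℝ) : (Fin k → X) → ℝ :=
  fun y => (∑ g ∈ surjs n k, f (y ∘ g)) / k.factorial

/-- Unsigned Stirling operator of the first kind
`c(n,k) = Σ_{λ={λ₁,…,λ_k} ∈ UP(n,k)} (|λ₁|−1)!⋯(|λ_k|−1)! · D_λ`. -/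
noncomputable def cop (n k : ℕ) (f : (Fin n → X) → ℝ) : (Fin k → X) → ℝ :=
  fun y => (∑ g ∈ surjs n k, (∏ i : Fin k, ((fiberCard g i - 1).factorial : ℝ)) * f (y ∘ g)) /
    k.factorial

/-- Stirling operator of the first kind `s(n,k) = (−1)^{n−k} c(n,k)`. -/
noncomputable def sop (n k : ℕ) (f : (Fin n → X) → ℝ) : (Fin k → X) → ℝ :=
  fun y => (-1 : ℝ) ^ (n - k) * cop n k f y

/-- Lah operator `L(n,k) = Σ_{λ={λ₁,…,λ_k} ∈ UP(n,k)} |λ₁|!⋯|λ_k|! · D_λ`. -/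
noncomputable def Lop (n k : ℕ) (f : (Fin n → X) → ℝ) : (Fin k → X) → ℝ :=
  fun y => (∑ g ∈ surjs n k, (∏ i : Fin k, ((fiberCard g i).factorial : ℝ)) * f (y ∘ g)) /
    k.factorial

end Ops

/-!
The density `(ω)_n(y₁,…,y_n)` depends only on the multiset of the points `y_i`: it is the product,
over the distinct points `x` of multiplicity `k`, of the one-variable falling factorials
`ω(x)(ω(x)−1)⋯(ω(x)−k+1)`. In this form, adding a point `a` to `s` multiplies by `ω(a) − s(a)`,
with `s(a)` the multiplicity of `a` in `s`. When `s` is split into `t` and `u`, the factor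
`(ω+σ)(a) − s(a)` is the sum of `ω(a) − t(a)` and `σ(a) − u(a)`, that is, `a` joins one part or the
other; by induction `(ω+σ)_n` is a sum over all subsets of the set of indices. The symmetric group
acts transitively on the `k`-element subsets, so averaging over permutations is averaging over
these `C(n,k)` subsets.
-/

section PretransitiveAction

variable {G β M : Type*} [Group G] [Fintype G] [MulAction G β] [MulAction.IsPretransitive G β]
  [AddCommMonoid M]

theorem sum_smul_eq_sum_smul (f : β → M) (b c : β) : ∑ g : G, f (g • b) = ∑ g : G, f (g • c) := by
  obtain ⟨h, rfl⟩ := MulAction.exists_smul_eq G b c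
  simpa only [Equiv.coe_mulRight, mul_smul] using
    (Equiv.sum_comp (Equiv.mulRight h) fun g : G ↦ f (g • b)).symm

theorem card_nsmul_sum_smul [Fintype β] (f : β → M) (b : β) :
    Fintype.card β • ∑ g : G, f (g • b) = Fintype.card G • ∑ c, f c :=
  calc
    Fintype.card β • ∑ g : G, f (g • b) = ∑ c : β, ∑ g : G, f (g • c) := by
      simp [sum_smul_eq_sum_smul f _ b]
    _ = ∑ g : G, ∑ c : β, f (g • c) := sum_comm
    _ = ∑ _g : G, ∑ c, f c := sum_congr rfl fun g _ ↦ Equiv.sum_comp (MulAction.toPerm g) f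
    _ = Fintype.card G • ∑ c, f c := by simp

end PretransitiveAction

section Subsets

open scoped Pointwise in
theorem choose_nsmul_sum_perm_map {α M : Type*} [Fintype α] [DecidableEq α] [AddCommMonoid M]
    (f : Finset α → M) (A : Finset α) :
    (Fintype.card α).choose #A • ∑ π : Equiv.Perm α, f (A.map π.toEmbedding)
      = (Fintype.card α).factorial • ∑ S ∈ powersetCard #A univ, f S := by
  have : MulAction.IsPretransitive (Equiv.Perm α) (Set.powersetCard α #A) :=
    Set.powersetCard.isPretransitive
  have h_orbit := card_nsmul_sum_smul (G := Equiv.Perm α)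
    (fun S : Set.powersetCard α #A ↦ f S) ⟨A, rfl⟩
  rw [← Nat.card_eq_fintype_card, Set.powersetCard.card, Nat.card_eq_fintype_card,
    Fintype.card_perm] at h_orbit
  rw [sum_subtype (p := (· ∈ Set.powersetCard α #A)) _ (by simp)]
  simpa [map_eq_image, smul_finset_def] using h_orbit

theorem compl_map_equiv {α β : Type*} [Fintype α] [Fintype β] [DecidableEq α] [DecidableEq β]
    (e : α ≃ β) (A : Finset α) : (A.map e.toEmbedding)ᶜ = Aᶜ.map e.toEmbedding := by
  rw [compl_eq_univ_sdiff, compl_eq_univ_sdiff, Finset.map_sdiff, map_univ_equiv]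

theorem compl_map_castAddEmb (k m : ℕ) :
    ((univ : Finset (Fin k)).map (Fin.castAddEmb m))ᶜ = univ.map (Fin.natAddEmb k) := by
  ext i
  induction i using Fin.addCases <;> simp [Fin.ext_iff] <;> lia

end Subsets

section MultisetFallingFactorial

variable {X R : Type*} [DecidableEq X] [CommRing R]

/-- The falling factorial density of `ω` as a function of the multiset of its arguments: the product
over the distinct points `x`, of multiplicity `k`, of `ω(x)(ω(x)−1)⋯(ω(x)−k+1)`. -/
noncomputable def multisetFallingFactorial (ω : X → R) (s : Multiset X) : R :=
  s.toFinsupp.prod fun x k ↦ (descPochhammer R k).eval (ω x)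

@[simp]
theorem multisetFallingFactorial_zero (ω : X → R) : multisetFallingFactorial ω 0 = 1 := by
  simp [multisetFallingFactorial]

theorem multisetFallingFactorial_cons (ω : X → R) (a : X) (s : Multiset X) :
    multisetFallingFactorial ω (a ::ₘ s) = multisetFallingFactorial ω s * (ω a - s.count a) := by
  have h_erase : (a ::ₘ s).toFinsupp.erase a = s.toFinsupp.erase a := by
    ext x
    by_cases hx : x = a <;> simp [hx]
  simp only [multisetFallingFactorial]
  rw [← Finsupp.mul_prod_erase' _ a _ (by simp),
    ← Finsupp.mul_prod_erase' s.toFinsupp a _ (by simp), h_erase, Multiset.toFinsupp_apply,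
    Multiset.toFinsupp_apply, Multiset.count_cons_self, descPochhammer_succ_eval]
  ring

theorem multisetFallingFactorial_add_map {ι : Type*} [DecidableEq ι] (ω σ : X → R) (y : ι → X)
    (T : Finset ι) :
    multisetFallingFactorial (ω + σ) (T.val.map y)
      = ∑ S ∈ T.powerset,
          multisetFallingFactorial ω (S.val.map y) *
            multisetFallingFactorial σ ((T \ S).val.map y) := by
  induction T using Finset.induction_on with
  | empty => simp
  | insert a T ha ih =>
    rw [insert_val_of_notMem ha, Multiset.map_cons, multisetFallingFactorial_cons, ih,
      sum_powerset_insert ha, ← sum_add_distrib, sum_mul]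
    refine sum_congr rfl fun S hS ↦ ?_
    have hST : S ⊆ T := mem_powerset.mp hS
    have haS : a ∉ S := notMem_mono hST ha
    have haTS : a ∉ T \ S := notMem_mono sdiff_subset ha
    have h_count : (T.val.map y).count (y a)
        = (S.val.map y).count (y a) + ((T \ S).val.map y).count (y a) := by
      rw [← Multiset.count_add, ← Multiset.map_add, sdiff_val,
        add_tsub_cancel_of_le (val_le_iff.mpr hST)]
    rw [insert_sdiff_of_notMem _ haS, insert_sdiff_insert, sdiff_insert_of_notMem ha,
      insert_val_of_notMem haS, insert_val_of_notMem haTS, Multiset.map_cons, Multiset.map_cons,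
      multisetFallingFactorial_cons, multisetFallingFactorial_cons, h_count, Pi.add_apply,
      Nat.cast_add]
    ring

end MultisetFallingFactorial

section Binomial

variable {X : Type*}

theorem ff_eq_multisetFallingFactorial [DecidableEq X] (ω : X → ℝ) (n : ℕ) (y : Fin n → X) :
    ff ω n y = multisetFallingFactorial ω (univ.val.map y) := by
  induction n with
  | zero => simp [ff]
  | succ n ih =>
    have h_cons : (univ : Finset (Fin (n + 1))).val.map y
        = y (Fin.last n) ::ₘ (univ : Finset (Fin n)).val.map (fun i ↦ y i.castSucc) := by
      simp [Fin.univ_castSuccEmb, -Fin.univ_val_map]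
    have h_count : ((univ : Finset (Fin n)).val.map fun i ↦ y i.castSucc).count (y (Fin.last n))
        = #{i : Fin n | y i.castSucc = y (Fin.last n)} := by
      simp only [Multiset.count_map, card_def, filter_val, eq_comm]
    simp only [ff]
    rw [h_cons, multisetFallingFactorial_cons, ih, h_count, sum_boole]

theorem choose_mul_symmFun_tensFun (F G : Multiset X → ℝ) {k m n : ℕ} (h : k + m = n)
    (y : Fin n → X) :
    n.choose k * symmFun n (castFun h (tensFun (fun u : Fin k → X ↦ F (univ.val.map u))
        fun v : Fin m → X ↦ G (univ.val.map v))) y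
      = ∑ S ∈ powersetCard k univ, F (S.val.map y) * G (Sᶜ.val.map y) := by
  subst h
  set A : Finset (Fin (k + m)) := univ.map (Fin.castAddEmb m) with hA
  have h_card : #A = k := by simp [hA]
  have h_tens (π : Equiv.Perm (Fin (k + m))) :
      F ((A.map π.toEmbedding).val.map y) * G ((A.map π.toEmbedding)ᶜ.val.map y)
        = tensFun (fun u : Fin k → X ↦ F (univ.val.map u))
            (fun v : Fin m → X ↦ G (univ.val.map v)) (y ∘ π) := by
    rw [compl_map_equiv, hA, compl_map_castAddEmb]
    simp only [map_val, Multiset.map_map]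
    rfl
  have h_sum := choose_nsmul_sum_perm_map (fun S ↦ F (S.val.map y) * G (Sᶜ.val.map y)) A
  simp only [h_tens, h_card, Fintype.card_fin, nsmul_eq_mul] at h_sum
  have h_factorial : ((k + m).factorial : ℝ) ≠ 0 := by positivity
  rw [symmFun, mul_div_assoc', div_eq_iff h_factorial, mul_comm (∑ S ∈ _, _)]
  exact h_sum

theorem fallingFactorial_binomial_general [DecidableEq X] (ω σ : X → ℝ) (n : ℕ) (y : Fin n → X) :
    ff (ω + σ) n y
      = ∑ k ∈ (range (n + 1)).attach,
          (n.choose k.1 : ℝ) *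
            symmFun n (castFun (Nat.add_sub_of_le (mem_range_succ_iff.mp k.2))
              (tensFun (ff ω k.1) (ff σ (n - k.1)))) y := by
  have ff_eq (τ : X → ℝ) (k : ℕ) :
      ff τ k = fun u ↦ multisetFallingFactorial τ (univ.val.map u) :=
    funext (ff_eq_multisetFallingFactorial τ k)
  simp only [ff_eq, choose_mul_symmFun_tensFun]
  rw [multisetFallingFactorial_add_map, sum_powerset, card_univ, Fintype.card_fin, ← sum_attach]
  simp only [compl_eq_univ_sdiff]

end Binomial

/-- Binomial identity for falling factorial measures:
`(ω+σ)_n = Σ_{k=0}^{n} C(n,k) · Sym((ω)_k ⊗ (σ)_{n−k})`. -/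
theorem fallingFactorial_binomial
    {X : Type*} [Fintype X] [DecidableEq X] (ω σ : X → ℝ) (n : ℕ) (y : Fin n → X) :
    ff (ω + σ) n y
      = ∑ k ∈ (Finset.range (n + 1)).attach,
          (n.choose k.1 : ℝ) *
            symmFun n (castFun (by have := Finset.mem_range.mp k.2; omega)
              (tensFun (ff ω k.1) (ff σ (n - k.1)))) y :=
  fallingFactorial_binomial_general ω σ n y
end

section
/- If the Stirling operators s(n,k) := (−1)^{n−k} c(n,k) and S(n,k) are defined on symmetric functions on X^n as above (with s(n,k)=S(n,k)=0 for k>n and both equal to the identity for k=n), then for all i, n ≥ 1 the biorthogonality identities hold: Σ_{k=1}^{n} s(k,i) ∘ S(n,k) = δ_{ni}·Id and Σ_{k=1}^{n} S(k,i) ∘ s(n,k) = δ_{ni}·Id as operators from symmetric functions on X^n to symmetric functions on X^i. -/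
open Finset

/-!
Both identities say that, under convolution over factorizations `p = h ∘ g` with `g` surjective,
the weight `1` and the Möbius weight `∏ (-1)^(|block| - 1) (|block| - 1)!` are inverse to each
other, the unit being the indicator of injectivity. Add a last element over `j` to the domain
of `p`.

* Weight `1` on `g`, Möbius weight on `h`: if the fibre of `h` over `j` has `m` elements, joining
  one of these blocks contributes the factor `m`, and being a new block the factor `-m`, or `1`
  when `m = 0`. So the two cancel exactly when `j` is already in the range of `p`.
* Möbius weight on `g`, weight `1` on `h`: joining a block of size `s` contributes `-s`, in total
  minus the size of the fibre of `p` over `j`, and being a new block contributes `1`. So adding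
  elements to `p` one by one yields a product of factors `1 - |p⁻¹(j)|`, one of which vanishes as
  soon as a value is repeated.
-/

section Surjections

lemma mem_surjs {n k : ℕ} {g : Fin n → Fin k} : g ∈ surjs n k ↔ Function.Surjective g := by
  simp [surjs]

lemma surjs_eq_empty_of_lt {n k : ℕ} (h : n < k) : surjs n k = ∅ := by
  refine eq_empty_of_forall_notMem fun g hg => h.not_ge ?_
  simpa using Fintype.card_le_of_surjective g (mem_surjs.1 hg)

lemma surjs_zero_right_eq_empty {n : ℕ} (hn : 1 ≤ n) : surjs n 0 = ∅ :=
  eq_empty_of_forall_notMem fun g _ => (g ⟨0, hn⟩).elim0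

lemma card_surjs_self (n : ℕ) : #(surjs n n) = n.factorial := by
  have hsurjs : surjs n n = ({g | Function.Injective g} : Finset (Fin n → Fin n)) := by
    simp only [surjs, Finite.injective_iff_surjective]
  rw [hsurjs, ← Fintype.card_subtype,
    Fintype.card_congr (Equiv.subtypeInjectiveEquivEmbedding (Fin n) (Fin n)),
    Fintype.card_embedding_eq, Fintype.card_fin, Nat.descFactorial_self]

lemma surjective_snoc_iff {n k : ℕ} (g : Fin n → Fin (k + 1)) (b : Fin (k + 1)) :
    Function.Surjective (Fin.snoc g b : Fin (n + 1) → Fin (k + 1)) ↔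
      Function.Surjective g ∨
        ∃ g' : Fin n → Fin k, Function.Surjective g' ∧ b.succAbove ∘ g' = g := by
  simp only [← Set.range_eq_univ, Fin.range_snoc]
  constructor
  · intro hg
    by_cases hb : b ∈ Set.range g
    · exact .inl (by rwa [Set.insert_eq_of_mem hb] at hg)
    · choose g' hg' using fun a => Fin.exists_succAbove_eq fun h : g a = b => hb ⟨a, h⟩
      obtain rfl : b.succAbove ∘ g' = g := funext hg'
      refine .inr ⟨g', Set.eq_univ_of_forall fun c => ?_, rfl⟩
      have hc : b.succAbove c ∈ insert b (Set.range (b.succAbove ∘ g')) := hg ▸ Set.mem_univ _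
      simpa [Fin.succAbove_ne] using hc
  · rintro (hg | ⟨g', hg', rfl⟩)
    · rw [hg, Set.insert_eq_of_mem (Set.mem_univ b)]
    · rw [Set.range_comp, hg', Set.image_univ, Fin.range_succAbove, Set.insert_eq,
        Set.union_compl_self]

lemma sum_surjs_succ {M : Type*} [AddCommMonoid M] {n k : ℕ}
    (Φ : (Fin (n + 1) → Fin (k + 1)) → M) :
    ∑ g ∈ surjs (n + 1) (k + 1), Φ g =
      ∑ b : Fin (k + 1), (∑ g ∈ surjs n (k + 1), Φ (Fin.snoc g b) +
        ∑ g ∈ surjs n k, Φ (Fin.snoc (b.succAbove ∘ g) b)) := by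
  have hinj (b : Fin (k + 1)) : Function.Injective fun g : Fin n → Fin k => b.succAbove ∘ g :=
    Fin.succAbove_right_injective.comp_left
  have hdisj (b : Fin (k + 1)) :
      Disjoint (surjs n (k + 1)) ((surjs n k).image (b.succAbove ∘ ·)) := by
    simp only [Finset.disjoint_right, mem_image, forall_exists_index, and_imp]
    rintro _ g - rfl hg
    obtain ⟨a, ha⟩ := mem_surjs.1 hg b
    exact Fin.succAbove_ne b _ ha
  have hfilter (b : Fin (k + 1)) :
      ({g | Function.Surjective (Fin.snoc g b : Fin (n + 1) → Fin (k + 1))} :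
        Finset (Fin n → Fin (k + 1))) = surjs n (k + 1) ∪ (surjs n k).image (b.succAbove ∘ ·) := by
    ext g
    simp [mem_surjs, surjective_snoc_iff]
  rw [surjs, sum_filter, ← (Fin.snocEquiv fun _ => Fin (k + 1)).sum_comp, Fintype.sum_prod_type]
  refine sum_congr rfl fun b _ => ?_
  rw [← sum_image (f := fun g => Φ (Fin.snoc g b)) (hinj b).injOn, ← sum_union (hdisj b),
    ← hfilter, sum_filter]
  rfl

end Surjections

section PartitionSum

variable {n i k : ℕ}

/-- The sum of `Φ` over the set partitions of `{1,…,n}`, a partition into `k` blocks being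
represented by the `k!` surjections onto `Fin k` that number its blocks. It is meant for `Φ`
independent of the numbering. -/
noncomputable def partitionSum (Φ : ∀ k, (Fin n → Fin k) → ℝ) : ℝ :=
  ∑ k ∈ range (n + 1), (∑ g ∈ surjs n k, Φ k g) / k.factorial

lemma partitionSum_congr {Φ Ψ : ∀ k, (Fin n → Fin k) → ℝ}
    (h : ∀ k g, Function.Surjective g → Φ k g = Ψ k g) : partitionSum Φ = partitionSum Ψ :=
  sum_congr rfl fun k _ => congrArg (· / _) <| sum_congr rfl fun g hg => h k g (mem_surjs.1 hg)

lemma partitionSum_const_mul (c : ℝ) (Φ : ∀ k, (Fin n → Fin k) → ℝ) :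
    partitionSum (fun k g => c * Φ k g) = c * partitionSum Φ := by
  simp only [partitionSum, ← mul_sum, mul_div_assoc]

/-- In a partition of `{1,…,n+1}` the last element either joins a block `b` of a partition of
`{1,…,n}` or is a block by itself. -/
lemma partitionSum_succ (Φ : ∀ k, (Fin (n + 1) → Fin k) → ℝ) (Ψ : ∀ k, (Fin n → Fin k) → ℝ)
    (h : ∀ k (b : Fin (k + 1)) g, Φ (k + 1) (Fin.snoc (b.succAbove ∘ g) b) = Ψ k g) :
    partitionSum Φ = partitionSum fun k g => ∑ b, Φ k (Fin.snoc g b) + Ψ k g := by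
  let join (k : ℕ) : ℝ := (∑ g ∈ surjs n k, ∑ b, Φ k (Fin.snoc g b)) / k.factorial
  let alone (k : ℕ) : ℝ := (∑ g ∈ surjs n k, Ψ k g) / k.factorial
  have hstep (k : ℕ) : (∑ g ∈ surjs (n + 1) (k + 1), Φ (k + 1) g) / (k + 1).factorial =
      join (k + 1) + alone k := by
    have hfact : (k.factorial : ℝ) ≠ 0 := by positivity
    simp only [sum_surjs_succ, h, sum_add_distrib, sum_const, card_univ, Fintype.card_fin, join,
      alone, Nat.factorial_succ, nsmul_eq_mul]
    rw [sum_comm]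
    push_cast
    field_simp
  have hjoin : ∑ k ∈ range (n + 1), join (k + 1) = ∑ k ∈ range (n + 1), join k := by
    rw [sum_range_succ, sum_range_succ' join]
    simp [join, surjs_eq_empty_of_lt]
  calc partitionSum Φ = ∑ k ∈ range (n + 1), (join (k + 1) + alone k) := by
        simp [partitionSum, sum_range_succ' _ (n + 1), hstep, surjs_zero_right_eq_empty]
    _ = ∑ k ∈ range (n + 1), (join k + alone k) := by rw [sum_add_distrib, hjoin, sum_add_distrib]
    _ = _ := by simp only [partitionSum, join, alone, sum_add_distrib, add_div]

/-- The convolution of weights on partitions, as in an incidence algebra: the sum of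
`w g * v h` over the factorizations of `p` into a surjection `g`, taken up to numbering of its
blocks, followed by an arbitrary map `h`. -/
noncomputable def surjConv (w : ∀ k, (Fin n → Fin k) → ℝ) (v : ∀ k, (Fin k → Fin i) → ℝ)
    (p : Fin n → Fin i) : ℝ :=
  partitionSum fun k g => ∑ h : Fin k → Fin i with h ∘ g = p, w k g * v k h

lemma surjConv_fin_zero (w : ∀ k, (Fin 0 → Fin k) → ℝ) (v : ∀ k, (Fin k → Fin i) → ℝ)
    (p : Fin 0 → Fin i) : surjConv w v p = w 0 Fin.elim0 * v 0 Fin.elim0 := by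
  simp [surjConv, partitionSum, surjs, Function.Surjective,
    Subsingleton.elim _ Fin.elim0]

lemma comp_snoc_eq_snoc_iff {α β : Type*} (h : α → β) (g : Fin n → α) (b : α) (p : Fin n → β)
    (j : β) :
    h ∘ (Fin.snoc g b : Fin (n + 1) → α) = Fin.snoc p j ↔ h ∘ g = p ∧ h b = j := by
  rw [Fin.comp_snoc, Fin.snoc_inj]

lemma sum_comp_snoc_succAbove_eq_snoc {M : Type*} [AddCommMonoid M] (b : Fin (k + 1))
    (g : Fin n → Fin k) (p : Fin n → Fin i) (j : Fin i) (Φ : (Fin (k + 1) → Fin i) → M) :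
    ∑ h : Fin (k + 1) → Fin i with
        h ∘ (Fin.snoc (b.succAbove ∘ g) b : Fin (n + 1) → Fin (k + 1)) = Fin.snoc p j, Φ h =
      ∑ h : Fin k → Fin i with h ∘ g = p, Φ (b.insertNth j h) := by
  symm
  refine sum_nbij' (b.insertNth (α := fun _ => Fin i) j) b.removeNth ?_ ?_ ?_ ?_ ?_
  · intro h hh
    simpa [comp_snoc_eq_snoc_iff, ← Function.comp_assoc] using hh
  · intro h hh
    simp only [mem_filter_univ, comp_snoc_eq_snoc_iff] at hh ⊢
    exact hh.1
  · simp
  · intro h hh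
    simp only [mem_filter_univ, comp_snoc_eq_snoc_iff] at hh
    rw [← hh.2, Fin.insertNth_self_removeNth]
  · exact fun _ _ => rfl

lemma surjConv_snoc {w : ∀ k, (Fin (n + 1) → Fin k) → ℝ} {w' : ∀ k, (Fin n → Fin k) → ℝ}
    {v v' : ∀ k, (Fin k → Fin i) → ℝ} (j : Fin i)
    (hw : ∀ k (b : Fin (k + 1)) g, w (k + 1) (Fin.snoc (b.succAbove ∘ g) b) = w' k g)
    (hv : ∀ k (b : Fin (k + 1)) h, v (k + 1) (b.insertNth j h) = v' k h) (p : Fin n → Fin i) :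
    surjConv w v (Fin.snoc p j) = partitionSum fun k g => ∑ h : Fin k → Fin i with h ∘ g = p,
      ((∑ b with h b = j, w k (Fin.snoc g b)) * v k h + w' k g * v' k h) := by
  rw [surjConv, partitionSum_succ _ fun k g => ∑ h : Fin k → Fin i with h ∘ g = p, w' k g * v' k h]
  · congr! 3 with k g
    simp only [comp_snoc_eq_snoc_iff, sum_add_distrib, sum_mul]
    rw [sum_comm' (t' := {h | h ∘ g = p}) (s' := fun h => {b | h b = j})]
    simp [and_comm]
  · intro k b g
    simp only [sum_comp_snoc_succAbove_eq_snoc, hw, hv]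

end PartitionSum

section Moebius

variable {n k i : ℕ}

lemma fiberCard_eq_zero_iff {g : Fin n → Fin k} {b : Fin k} :
    fiberCard g b = 0 ↔ b ∉ Set.range g := by
  simp [fiberCard, filter_eq_empty_iff]

lemma fiberCard_insertNth (a : Fin (n + 1)) (g : Fin n → Fin k) (b c : Fin k) :
    fiberCard (a.insertNth b g : Fin (n + 1) → Fin k) c =
      fiberCard g c + if b = c then 1 else 0 := by
  simp only [fiberCard, card_filter, Fin.sum_univ_succAbove _ a, Fin.insertNth_apply_same,
    Fin.insertNth_apply_succAbove, add_comm]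

lemma fiberCard_succAbove_comp (b : Fin (k + 1)) (g : Fin n → Fin k) (c : Fin k) :
    fiberCard (b.succAbove ∘ g) (b.succAbove c) = fiberCard g c := by
  simp [fiberCard]

lemma fiberCard_succAbove_comp_self (b : Fin (k + 1)) (g : Fin n → Fin k) :
    fiberCard (b.succAbove ∘ g) b = 0 := by
  simp [fiberCard, Fin.succAbove_ne]

lemma fiberCard_comp (h : Fin k → Fin i) (g : Fin n → Fin k) (j : Fin i) :
    fiberCard (h ∘ g) j = ∑ b with h b = j, fiberCard g b := by
  simp [fiberCard, sum_card_fiberwise_eq_card_filter]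

lemma fiberCard_of_injective {p : Fin n → Fin i} (hp : Function.Injective p) (j : Fin i) :
    fiberCard p j = if j ∈ Set.range p then 1 else 0 := by
  split_ifs with hj
  · obtain ⟨a, rfl⟩ := hj
    simp [fiberCard, hp.eq_iff, filter_eq']
  · exact fiberCard_eq_zero_iff.2 hj

lemma sum_fiberCard (g : Fin n → Fin k) : ∑ b, fiberCard g b = n := by
  simpa [fiberCard] using sum_card_fiberwise_eq_card_filter univ univ g

lemma sum_fiberCard_sub_one {g : Fin n → Fin k} (hg : Function.Surjective g) :
    ∑ b, (fiberCard g b - 1) = n - k := by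
  rw [sum_tsub_distrib, sum_fiberCard]
  · simp
  · intro b _
    exact Nat.one_le_iff_ne_zero.2 fun h => fiberCard_eq_zero_iff.1 h (hg b)

/-- The Möbius function `(-1)^(m-1) (m-1)!` of the lattice of partitions of an `m`-element set.
Truncated subtraction gives an empty block the weight `1`. -/
noncomputable def blockMoebius (m : ℕ) : ℝ := (-1) ^ (m - 1) * (m - 1).factorial

lemma blockMoebius_succ (m : ℕ) :
    blockMoebius (m + 1) = (if m = 0 then 1 else -(m : ℝ)) * blockMoebius m := by
  cases m with
  | zero => simp [blockMoebius]
  | succ m =>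
    simp only [blockMoebius, Nat.add_sub_cancel, Nat.succ_ne_zero, if_false, pow_succ,
      Nat.factorial_succ, Nat.cast_mul]
    ring

/-- The Möbius function of the partition lattice on the interval from the partition into
singletons to the partition into fibres of `g`. -/
noncomputable def partitionMoebius (g : Fin n → Fin k) : ℝ := ∏ b, blockMoebius (fiberCard g b)

lemma partitionMoebius_of_surjective {g : Fin n → Fin k} (hg : Function.Surjective g) :
    partitionMoebius g = (-1) ^ (n - k) * ∏ b, ((fiberCard g b - 1).factorial : ℝ) := by
  simp only [partitionMoebius, blockMoebius, prod_mul_distrib, prod_pow_eq_pow_sum,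
    sum_fiberCard_sub_one hg]

lemma partitionMoebius_insertNth (a : Fin (n + 1)) (g : Fin n → Fin k) (b : Fin k) :
    partitionMoebius (a.insertNth b g : Fin (n + 1) → Fin k) =
      (if fiberCard g b = 0 then 1 else -(fiberCard g b : ℝ)) * partitionMoebius g := by
  have hne : ∀ c ∈ univ.erase b,
      blockMoebius (fiberCard (a.insertNth b g : Fin (n + 1) → Fin k) c) =
        blockMoebius (fiberCard g c) := fun c hc => by
    rw [fiberCard_insertNth, if_neg (ne_of_mem_erase hc).symm, add_zero]
  rw [partitionMoebius, partitionMoebius, ← mul_prod_erase _ _ (mem_univ b), prod_congr rfl hne,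
    fiberCard_insertNth, if_pos rfl, blockMoebius_succ, mul_assoc,
    mul_prod_erase _ (fun c => blockMoebius (fiberCard g c)) (mem_univ b)]

lemma partitionMoebius_snoc (g : Fin n → Fin k) (b : Fin k) :
    partitionMoebius (Fin.snoc g b : Fin (n + 1) → Fin k) =
      (if fiberCard g b = 0 then 1 else -(fiberCard g b : ℝ)) * partitionMoebius g := by
  rw [← Fin.insertNth_last', partitionMoebius_insertNth]

lemma partitionMoebius_snoc_succAbove_comp (b : Fin (k + 1)) (g : Fin n → Fin k) :
    partitionMoebius (Fin.snoc (b.succAbove ∘ g) b : Fin (n + 1) → Fin (k + 1)) =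
      partitionMoebius g := by
  rw [partitionMoebius_snoc, if_pos (fiberCard_succAbove_comp_self b g), one_mul, partitionMoebius,
    Fin.prod_univ_succAbove _ b, fiberCard_succAbove_comp_self]
  simp [fiberCard_succAbove_comp, partitionMoebius, blockMoebius]

end Moebius

section Biorthogonality

variable {n k i : ℕ}

lemma surjConv_one_partitionMoebius_snoc (p : Fin n → Fin i) (j : Fin i) :
    surjConv (fun _ _ => 1) (fun _ => partitionMoebius) (Fin.snoc p j) =
      (if j ∈ Set.range p then 0 else 1) *
        surjConv (fun _ _ => 1) (fun _ => partitionMoebius) p := by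
  rw [surjConv_snoc j (fun _ _ _ => rfl) fun _ b h => partitionMoebius_insertNth b h j, surjConv,
    ← partitionSum_const_mul]
  refine partitionSum_congr fun k g hg => ?_
  rw [mul_sum]
  refine sum_congr rfl fun h hh => ?_
  obtain rfl : h ∘ g = p := by simpa using hh
  have hrange : j ∈ Set.range (h ∘ g) ↔ fiberCard h j ≠ 0 := by
    rw [hg.range_comp, ne_eq, fiberCard_eq_zero_iff, not_not]
  rw [sum_const, nsmul_one, ← fiberCard]
  by_cases hj : fiberCard h j = 0 <;> simp [hrange, hj]

lemma surjConv_partitionMoebius_one_snoc (p : Fin n → Fin i) (j : Fin i) :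
    surjConv (fun _ => partitionMoebius) (fun _ _ => 1) (Fin.snoc p j) =
      (1 - fiberCard p j) * surjConv (fun _ => partitionMoebius) (fun _ _ => 1) p := by
  rw [surjConv_snoc j (fun _ => partitionMoebius_snoc_succAbove_comp) fun _ _ _ => rfl, surjConv,
    ← partitionSum_const_mul]
  refine partitionSum_congr fun k g hg => ?_
  rw [mul_sum]
  refine sum_congr rfl fun h hh => ?_
  obtain rfl : h ∘ g = p := by simpa using hh
  have hjoin (b : Fin k) : partitionMoebius (Fin.snoc g b : Fin (n + 1) → Fin k) =
      -(fiberCard g b * partitionMoebius g) := by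
    rw [partitionMoebius_snoc, if_neg fun h => fiberCard_eq_zero_iff.1 h (hg b), neg_mul]
  rw [fiberCard_comp, sum_congr rfl fun b _ => hjoin b, sum_neg_distrib, ← sum_mul]
  push_cast
  ring

theorem surjConv_one_partitionMoebius (p : Fin n → Fin i) :
    surjConv (fun _ _ => 1) (fun _ => partitionMoebius) p =
      if Function.Injective p then 1 else 0 := by
  induction p using Fin.snocInduction with
  | elim0 =>
    simp [surjConv_fin_zero, Function.injective_of_subsingleton, partitionMoebius, fiberCard,
      blockMoebius]
  | snoc p j ih =>
    rw [surjConv_one_partitionMoebius_snoc, ih]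
    by_cases hj : j ∈ Set.range p <;> simp [Fin.snoc_injective_iff, hj]

theorem surjConv_partitionMoebius_one (p : Fin n → Fin i) :
    surjConv (fun _ => partitionMoebius) (fun _ _ => 1) p =
      if Function.Injective p then 1 else 0 := by
  induction p using Fin.snocInduction with
  | elim0 => simp [surjConv_fin_zero, Function.injective_of_subsingleton, partitionMoebius]
  | snoc p j ih =>
    rw [surjConv_partitionMoebius_one_snoc, ih]
    by_cases hp : Function.Injective p
    · by_cases hj : j ∈ Set.range p <;>
        simp [Fin.snoc_injective_iff, hp, fiberCard_of_injective hp, hj]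
    · simp [Fin.snoc_injective_iff, hp]

variable {X : Type*}

/-- The operator `Σ_λ w(λ) D_λ` from functions on `X^n` to functions on `X^k`, a partition `λ` of
`{1,…,n}` into `k` blocks being represented by the surjections that number its blocks. -/
noncomputable def partitionOp (w : (Fin n → Fin k) → ℝ) (f : (Fin n → X) → ℝ) :
    (Fin k → X) → ℝ :=
  fun y => (∑ g ∈ surjs n k, w g * f (y ∘ g)) / k.factorial

lemma Sop_eq_partitionOp (f : (Fin n → X) → ℝ) : Sop n k f = partitionOp (fun _ => 1) f := by
  ext y
  simp only [Sop, partitionOp, one_mul]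

lemma sop_eq_partitionOp (f : (Fin n → X) → ℝ) : sop n k f = partitionOp partitionMoebius f := by
  ext y
  rw [sop, cop, partitionOp, ← mul_div_assoc, mul_sum]
  congr 1
  refine sum_congr rfl fun g hg => ?_
  rw [partitionMoebius_of_surjective (mem_surjs.1 hg), mul_assoc]

lemma sum_surjs_sum_comp_eq {M : Type*} [AddCommMonoid M] {g : Fin n → Fin k}
    (hg : Function.Surjective g) (Φ : (Fin k → Fin i) → (Fin n → Fin i) → M) :
    ∑ p ∈ surjs n i, ∑ h : Fin k → Fin i with h ∘ g = p, Φ h p =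
      ∑ h ∈ surjs k i, Φ h (h ∘ g) := by
  rw [sum_comm' (t' := surjs k i) (s' := fun h => {h ∘ g})]
  · simp only [sum_singleton]
  · intro p h
    simp only [mem_surjs, mem_filter_univ, mem_singleton]
    constructor
    · rintro ⟨hp, rfl⟩
      exact ⟨rfl, hp.of_comp⟩
    · rintro ⟨rfl, hh⟩
      exact ⟨hh.comp hg, rfl⟩

lemma partitionOp_partitionOp (w : (Fin n → Fin k) → ℝ) (v : (Fin k → Fin i) → ℝ)
    (f : (Fin n → X) → ℝ) :
    partitionOp v (partitionOp w f) = partitionOp (fun p : Fin n → Fin i =>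
      (∑ g ∈ surjs n k, ∑ h : Fin k → Fin i with h ∘ g = p, w g * v h) / k.factorial) f := by
  ext y
  rw [partitionOp, partitionOp]
  congr 1
  calc ∑ h ∈ surjs k i, v h * partitionOp w f (y ∘ h)
      = (∑ g ∈ surjs n k, ∑ h ∈ surjs k i, w g * v h * f (y ∘ (h ∘ g))) / k.factorial := by
        rw [sum_comm, sum_div]
        simp only [partitionOp, mul_div_assoc', mul_sum, Function.comp_assoc, mul_left_comm,
          mul_assoc]
    _ = (∑ g ∈ surjs n k, ∑ p ∈ surjs n i, ∑ h : Fin k → Fin i with h ∘ g = p,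
          w g * v h * f (y ∘ p)) / k.factorial := by
        congr! 2 with g hg
        exact (sum_surjs_sum_comp_eq (mem_surjs.1 hg) fun h p => w g * v h * f (y ∘ p)).symm
    _ = _ := by
        rw [sum_comm, sum_div]
        simp only [sum_mul, div_mul_eq_mul_div]

lemma sum_partitionOp_partitionOp (hn : 1 ≤ n) (w : ∀ k, (Fin n → Fin k) → ℝ)
    (v : ∀ k, (Fin k → Fin i) → ℝ) (f : (Fin n → X) → ℝ) (y : Fin i → X) :
    ∑ k ∈ Icc 1 n, partitionOp (v k) (partitionOp (w k) f) y = partitionOp (surjConv w v) f y := by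
  have hrange : ∑ k ∈ Icc 1 n, partitionOp (v k) (partitionOp (w k) f) y =
      ∑ k ∈ range (n + 1), partitionOp (v k) (partitionOp (w k) f) y := by
    have hzero : partitionOp (v 0) (partitionOp (w 0) f) y = 0 := by
      simp [partitionOp, surjs_zero_right_eq_empty hn]
    rw [range_eq_Ico, sum_eq_sum_Ico_succ_bot n.succ_pos, hzero, zero_add]
    rfl
  rw [hrange]
  simp only [partitionOp_partitionOp]
  simp only [partitionOp, ← sum_div]
  rw [sum_comm]
  simp only [surjConv, partitionSum, sum_mul]

lemma partitionOp_injective_indicator {f : (Fin n → X) → ℝ} (hf : IsSymmFun f) (y : Fin i → X) :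
    partitionOp (fun p => if Function.Injective p then 1 else 0) f y =
      if h : n = i then castFun h f y else 0 := by
  split_ifs with hni
  · subst hni
    have hperm (p) (hp : p ∈ surjs n n) :
        (if Function.Injective p then 1 else 0) * f (y ∘ p) = f y := by
      have hbij := Finite.surjective_iff_bijective.1 (mem_surjs.1 hp)
      rw [if_pos hbij.injective, one_mul]
      exact hf (Equiv.ofBijective p hbij) y
    rw [partitionOp, sum_congr rfl hperm, sum_const, card_surjs_self, nsmul_eq_mul,
      mul_div_cancel_left₀ _ (by positivity)]
    rfl
  · have hinj (p) (hp : p ∈ surjs n i) : ¬ Function.Injective p := fun hinj =>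
      hni <| by simpa using Fintype.card_of_bijective ⟨hinj, mem_surjs.1 hp⟩
    rw [partitionOp, sum_eq_zero fun p hp => by rw [if_neg (hinj p hp), zero_mul], zero_div]

theorem stirling_biorthogonality_general (hn : 1 ≤ n) {f : (Fin n → X) → ℝ} (hf : IsSymmFun f) :
    (∀ y : Fin i → X, ∑ k ∈ Icc 1 n, sop k i (Sop n k f) y =
        if h : n = i then castFun h f y else 0) ∧
      ∀ y : Fin i → X, ∑ k ∈ Icc 1 n, Sop k i (sop n k f) y =
        if h : n = i then castFun h f y else 0 := by
  simp only [sop_eq_partitionOp, Sop_eq_partitionOp]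
  constructor <;> intro y
  · rw [sum_partitionOp_partitionOp hn, funext surjConv_one_partitionMoebius,
      partitionOp_injective_indicator hf]
  · rw [sum_partitionOp_partitionOp hn, funext surjConv_partitionMoebius_one,
      partitionOp_injective_indicator hf]

end Biorthogonality

/-- Biorthogonality of the Stirling operators: for `i, n ≥ 1`,
`Σ_{k=1}^{n} s(k,i) ∘ S(n,k) = δ_{ni}·Id` and `Σ_{k=1}^{n} S(k,i) ∘ s(n,k) = δ_{ni}·Id`
as operators from symmetric functions on `X^n` to symmetric functions on `X^i`. -/
theorem stirling_biorthogonality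
    {X : Type*} [Fintype X] [DecidableEq X] {i n : ℕ} (hi : 1 ≤ i) (hn : 1 ≤ n)
    (f : (Fin n → X) → ℝ) (hf : IsSymmFun f) :
    (∀ y : Fin i → X,
        (∑ k ∈ Finset.Icc 1 n, sop k i (Sop n k f) y)
          = if h : n = i then castFun h f y else 0)
    ∧ (∀ y : Fin i → X,
        (∑ k ∈ Finset.Icc 1 n, Sop k i (sop n k f) y)
          = if h : n = i then castFun h f y else 0) :=
  stirling_biorthogonality_general hn hf
end
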